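/- Let 𝒱 be a complex Banach space and 𝒜 a closed linear operator on 𝒱 with iℤ ⊆ ρ(𝒜) and sup{‖n(in − 𝒜)⁻¹‖_{𝒱→𝒱} : n ∈ ℤ} < ∞. Then for each f ∈ C^β_{2π}(ℝ,𝒱) there exists a unique 2π-periodic solution u ∈ C^{1+β}_{2π}(ℝ,𝒱) ∩ C^β_{2π}(ℝ,𝒟(𝒜)) of u_t = 𝒜u + f(t) for t ∈ ℝ. -/

import Mathlib

open Real Filter Set Function MeasureTheory
open scoped ENNReal

noncomputable section

namespace HopfStmt

/-- The sup part of the periodic Hölder norm. -/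
def supN {E : Type*} [NormedAddCommGroup E] (u : ℝ → E) : ℝ := ⨆ t : ℝ, ‖u t‖

/-- The Hölder seminorm part. -/
def holS {E : Type*} [NormedAddCommGroup E] (β : ℝ) (u : ℝ → E) : ℝ :=
  ⨆ p : ℝ × ℝ, ‖u p.1 - u p.2‖ / |p.1 - p.2| ^ β

/-- The norm of `C^β_{2π}(ℝ, E)`. -/
def holderN {E : Type*} [NormedAddCommGroup E] (β : ℝ) (u : ℝ → E) : ℝ :=
  supN u + holS β u

/-- Membership in `C^β_{2π}(ℝ, E)`: `2π`-periodic and `β`-Hölder continuous. -/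
def MemHolder {E : Type*} [NormedAddCommGroup E] (β : ℝ) (u : ℝ → E) : Prop :=
  Function.Periodic u (2 * π) ∧ ∃ C : ℝ, ∀ s t : ℝ, ‖u s - u t‖ ≤ C * |s - t| ^ β

/-- Membership in the span of the first cosine and sine modes: `w = a ⊗ c₁ + b ⊗ s₁`. -/
def memSp1 {E : Type*} [AddCommGroup E] [Module ℝ E] (w : ℝ → E) : Prop :=
  ∃ a b : E, ∀ t : ℝ, w t = Real.cos t • a + Real.sin t • b

/-- `L₁ ψ := Re (ψ ⊗ e₁)`, i.e. `(L₁ψ)(t) = cos t • ψ₁ - sin t • ψ₂` for `ψ = ψ₁ + iψ₂`. -/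
def L1 {E : Type*} [AddCommGroup E] [Module ℝ E] (ψ : E × E) : ℝ → E :=
  fun t => Real.cos t • ψ.1 - Real.sin t • ψ.2

/-- Multiplication by the complex scalar `c` on the complexification `E_c = E × E`. -/
def csmul {E : Type*} [AddCommGroup E] [Module ℝ E] (c : ℂ) (x : E × E) : E × E :=
  (c.re • x.1 - c.im • x.2, c.im • x.1 + c.re • x.2)

/-- Complex conjugation on the complexification. -/
def conjC {E : Type*} [AddCommGroup E] (x : E × E) : E × E := (x.1, -x.2)

variable {V : Type*} [NormedAddCommGroup V] [NormedSpace ℝ V]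
variable {U : Type*} [NormedAddCommGroup U] [NormedSpace ℝ U]

/-- The complexified inclusion `ι_c : U_c → V_c`. -/
def iotaC (ι : U →L[ℝ] V) (ψ : U × U) : V × V := (ι ψ.1, ι ψ.2)

/-- The complexified operator `A_c : U_c → V_c`. -/
def AcC (A : U →L[ℝ] V) (ψ : U × U) : V × V := (A ψ.1, A ψ.2)

/-- The operator `c - A_c : U_c → V_c` for a complex scalar `c`. -/
def cMinusA (ι A : U →L[ℝ] V) (c : ℂ) (ψ : U × U) : V × V :=
  csmul c (iotaC ι ψ) - AcC A ψ

/-- The kernel `𝒩(i - A_c) ⊆ U_c`. -/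
def kerIA (ι A : U →L[ℝ] V) : Set (U × U) := {ψ | cMinusA ι A Complex.I ψ = 0}

/-- The range `ℛ(i - A_c) ⊆ V_c`. -/
def ranIA (ι A : U →L[ℝ] V) : Set (V × V) := Set.range (cMinusA ι A Complex.I)

/-- `V♯ := ℛ(i - A_c) ∩ ℛ(-i - A_c)`. -/
def Vsharp (ι A : U →L[ℝ] V) : Set (V × V) :=
  Set.range (cMinusA ι A Complex.I) ∩ Set.range (cMinusA ι A (-Complex.I))

/-- The `V`-valued time derivative of `w : ℝ → U` (through the inclusion `ι`). -/
def Xder (ι : U →L[ℝ] V) (w : ℝ → U) : ℝ → V := fun t => deriv (fun s => ι (w s)) t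

/-- Membership in `X := C^{1+β}_{2π}(ℝ,V) ∩ C^β_{2π}(ℝ,U)`. -/
def MemX (β : ℝ) (ι : U →L[ℝ] V) (w : ℝ → U) : Prop :=
  MemHolder β w ∧ (∀ t : ℝ, DifferentiableAt ℝ (fun s => ι (w s)) t) ∧
    MemHolder β (Xder ι w)

/-- The norm of `X`: `‖w‖_X = ‖w‖_{V,1+β} + ‖w‖_{U,β}`. -/
def normX (β : ℝ) (ι : U →L[ℝ] V) (w : ℝ → U) : ℝ :=
  (holderN β (fun t => ι (w t)) + holderN β (Xder ι w)) + holderN β w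

/-- `T₁ w := ẇ - A w`. -/
def T1op (ι A : U →L[ℝ] V) (w : ℝ → U) : ℝ → V := fun t => Xder ι w t - A (w t)

/-- Hypothesis (H2): `±i` are simple eigenvalues of `A`, i.e.
`dim 𝒩(i - A_c) = 1 = codim ℛ(i - A_c)` and nonzero kernel elements do not lie in the range. -/
def H2hyp (ι A : U →L[ℝ] V) : Prop :=
  (∃ ψ ∈ kerIA ι A, ψ ≠ 0 ∧ ∀ φ ∈ kerIA ι A, ∃ c : ℂ, φ = csmul c ψ) ∧
  (∃ χ : V × V, χ ∉ ranIA ι A ∧ ∀ v : V × V, ∃ c : ℂ, ∃ r ∈ ranIA ι A, v = r + csmul c χ) ∧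
  (∀ ψ ∈ kerIA ι A, ψ ≠ 0 → iotaC ι ψ ∉ ranIA ι A)

/-- Hypothesis (H4): `ik ∈ ρ(A_c)` for `k ∈ ℤ \ {-1, 1}`. -/
def H4hyp (ι A : U →L[ℝ] V) : Prop :=
  ∀ k : ℤ, k ≠ 1 → k ≠ -1 → Function.Bijective (cMinusA ι A (Complex.I * (k : ℂ)))

/-- Hypothesis (H5): `‖(in - A_c)⁻¹‖ ≤ M / n` for `n = 2, 3, 4, ...`. -/
def H5hyp (ι A : U →L[ℝ] V) : Prop :=
  ∃ M : ℝ, 0 < M ∧ ∀ n : ℕ, 2 ≤ n →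
    ∀ ψ : U × U, (n : ℝ) * ‖iotaC ι ψ‖ ≤ M * ‖cMinusA ι A (Complex.I * (n : ℂ)) ψ‖

/-- Hypothesis (H3): the eigenvalue branch `μ(λ)` of `A_c + (h_u(λ,0))_c` through `μ(0) = i`
satisfies the transversality condition `Re μ'(0) ≠ 0`. -/
def H3hyp (ι A : U →L[ℝ] V) (h : ℝ → U → V) : Prop :=
  ∃ (ε : ℝ) (μ : ℝ → ℂ) (ψb : ℝ → U × U) (μ' : ℂ), 0 < ε ∧
    μ 0 = Complex.I ∧ ψb 0 ∈ kerIA ι A ∧ ψb 0 ≠ 0 ∧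
    ContinuousOn ψb (Metric.ball (0 : ℝ) ε) ∧
    (∀ lam ∈ Metric.ball (0 : ℝ) ε,
      AcC A (ψb lam) + (fderiv ℝ (h lam) 0 (ψb lam).1, fderiv ℝ (h lam) 0 (ψb lam).2)
        = csmul (μ lam) (iotaC ι (ψb lam))) ∧
    HasDerivAt μ μ' 0 ∧ μ'.re ≠ 0

/-- Unbundled notion: `f : (E, NE) → (F, NF)` is of class `C²` on `D` (Fréchet sense). -/
def UFC2On {E F : Type*} [AddCommGroup E] [Module ℝ E] [AddCommGroup F] [Module ℝ F]
    (NE : E → ℝ) (NF : F → ℝ) (D : Set E) (f : E → F) : Prop :=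
  ∃ (D1 : E → E → F) (D2 : E → E → E → F),
    (∀ x ∈ D, IsLinearMap ℝ (D1 x) ∧ ∃ C : ℝ, ∀ e, NF (D1 x e) ≤ C * NE e) ∧
    (∀ x ∈ D, ∀ ε > (0 : ℝ), ∃ d > (0 : ℝ), ∀ y ∈ D, NE (y - x) < d →
      NF (f y - f x - D1 x (y - x)) ≤ ε * NE (y - x)) ∧
    (∀ x ∈ D, (∀ e, IsLinearMap ℝ (D2 x e)) ∧ (∀ e', IsLinearMap ℝ (fun e => D2 x e e')) ∧
      ∃ C : ℝ, ∀ e e', NF (D2 x e e') ≤ C * NE e * NE e') ∧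
    (∀ x ∈ D, ∀ ε > (0 : ℝ), ∃ d > (0 : ℝ), ∀ y ∈ D, NE (y - x) < d →
      ∀ e, NF (D1 y e - D1 x e - D2 x (y - x) e) ≤ ε * NE (y - x) * NE e) ∧
    (∀ x ∈ D, ∀ ε > (0 : ℝ), ∃ d > (0 : ℝ), ∀ y ∈ D, NE (y - x) < d →
      ∀ e e', NF (D2 y e e' - D2 x e e') ≤ ε * NE e * NE e')

/-- Unbundled notion: `f : ℝ → (E, NE)` is `C¹` on `s` with derivative `f'`. -/
def UC1On {E : Type*} [AddCommGroup E] [Module ℝ E] (NE : E → ℝ) (s : Set ℝ)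
    (f f' : ℝ → E) : Prop :=
  (∀ a ∈ s, ∀ ε > (0 : ℝ), ∃ d > (0 : ℝ), ∀ b ∈ s, |b - a| < d →
    NE (f b - f a - (b - a) • f' a) ≤ ε * |b - a|) ∧
  (∀ a ∈ s, ∀ ε > (0 : ℝ), ∃ d > (0 : ℝ), ∀ b ∈ s, |b - a| < d → NE (f' b - f' a) ≤ ε)


/-!
On the circle `ℝ / 2πℤ` the equation `u' = 𝒜u + f` says that `û n = R n (f̂ n)` for every `n`, where
`R n = (in - 𝒜)⁻¹`; this settles uniqueness and reduces existence to the boundedness of the Fourier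
multiplier `R` on `C^β`. By the resolvent identity `R (n + 1) - R n = -i R (n + 1) R n`, the decay
`‖R n‖ = O(1 / |n|)` on `𝒱` makes `R`, as a sequence of operators into `𝒟(𝒜)`, satisfy the Mikhlin
conditions of order two.

Such a multiplier is cut into dyadic blocks `|n| ≈ 2 ^ j`. Two summations by parts bound the kernel
of a block by `2 ^ j (1 + 2 ^ j |s|)⁻²`, which is integrable against the modulus of continuity
`|s| ^ β` because `β < 1`. Since the kernel has mean zero, the `j`-th block applied to `f` is
`O(2 ^ (-jβ))`, and its derivative, which is a block of the same kind times `2 ^ j`, is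
`O(2 ^ (j(1 - β)))`; summing over `j` gives a `β`-Hölder function.
-/

section

open scoped NNReal fwdDiff Topology
open AddCircle (haarAddCircle)

/-! ### Characters of the circle and finitely supported symbols -/

section Characters

variable {T : ℝ} {E : Type*} [NormedAddCommGroup E]

lemma norm_fourier_apply (n : ℤ) (x : AddCircle T) : ‖fourier n x‖ = 1 :=
  Circle.norm_coe _

lemma support_fwdDiff_finite {G : Type*} [AddCommGroup G] {c : ℤ → G} (hc : c.support.Finite) :
    (Δ_[1] c).support.Finite := by
  refine ((hc.preimage (add_left_injective (1 : ℤ)).injOn).union hc).subset fun n hn => ?_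
  by_contra h
  simp_all [fwdDiff]

lemma exists_coe_eq_abs_eq_norm (x : AddCircle T) :
    ∃ d : ℝ, (d : AddCircle T) = x ∧ |d| = ‖x‖ := by
  induction x using QuotientAddGroup.induction_on with
  | H y =>
    refine ⟨y - round (T⁻¹ * y) * T, ?_, (AddCircle.norm_eq T).symm⟩
    rw [AddCircle.coe_sub, sub_eq_self, AddCircle.coe_eq_zero_iff]
    exact ⟨_, zsmul_eq_mul _ _⟩

lemma mul_norm_le_norm_fourier_one_sub_one [hT : Fact (0 < T)] (x : AddCircle T) :
    4 * (‖x‖ / T) ≤ ‖fourier 1 x - 1‖ := by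
  have hT := hT.out
  have hhalf := AddCircle.norm_le_half_period (x := x) T hT.ne'
  obtain ⟨d, rfl, hd⟩ := exists_coe_eq_abs_eq_norm x
  rw [← hd] at hhalf ⊢
  have hsin : 2 / π * |π * d / T| ≤ |Real.sin (π * d / T)| := by
    refine Real.mul_abs_le_abs_sin ?_
    rw [abs_div, abs_mul, abs_of_pos pi_pos, abs_of_pos hT, div_le_div_iff₀ hT two_pos]
    rw [abs_of_pos hT] at hhalf
    nlinarith [pi_pos]
  have hexp : fourier 1 (d : AddCircle T) = Complex.exp (Complex.I * (2 * π * d / T : ℝ)) := by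
    rw [fourier_coe_apply]
    push_cast
    ring_nf
  rw [hexp, Complex.norm_exp_I_mul_ofReal_sub_one, norm_mul, Real.norm_two, Real.norm_eq_abs,
    show 2 * π * d / T / 2 = π * d / T by ring]
  rw [abs_div, abs_mul, abs_of_pos pi_pos, abs_of_pos hT] at hsin
  calc 4 * (|d| / T) = 2 * (2 / π * (π * |d| / T)) := by field_simp; ring
    _ ≤ 2 * |Real.sin (π * d / T)| := by gcongr

variable [NormedSpace ℂ E] {c : ℤ → E}

/-- The sum of the Fourier series with coefficients `c`, with the junk value `0` where the series
is not summable; below, `c` always has finite support. -/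
def fourierSeries (c : ℤ → E) (x : AddCircle T) : E := ∑' n, fourier n x • c n

lemma hasSum_fourierSeries (hc : c.support.Finite) (x : AddCircle T) :
    HasSum (fun n => fourier n x • c n) (fourierSeries c x) :=
  (summable_of_hasFiniteSupport
    (hc.subset (support_smul_subset_right (fun n => fourier n x) c))).hasSum

lemma fourierSeries_eq_sum {S : Finset ℤ} (hc : c.support ⊆ S) (x : AddCircle T) :
    fourierSeries c x = ∑ n ∈ S, fourier n x • c n :=
  tsum_eq_sum fun n hn => by rw [notMem_support.mp fun h => hn (hc h), smul_zero]

lemma norm_fourierSeries_le_card_mul {S : Finset ℤ} (hc : c.support ⊆ S) {B : ℝ}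
    (hB : ∀ n, ‖c n‖ ≤ B) (x : AddCircle T) : ‖fourierSeries c x‖ ≤ S.card * B := by
  rw [fourierSeries_eq_sum hc, ← nsmul_eq_mul]
  refine (norm_sum_le _ _).trans (Finset.sum_le_card_nsmul _ _ _ fun n _ => ?_)
  rw [norm_smul, norm_fourier_apply, one_mul]
  exact hB n

lemma continuous_fourierSeries (hc : c.support.Finite) :
    Continuous (fourierSeries c : AddCircle T → E) := by
  have hS : c.support ⊆ hc.toFinset := hc.coe_toFinset.ge
  rw [funext (fourierSeries_eq_sum (T := T) hS)]
  fun_prop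

/-- Summation by parts. -/
lemma fourierSeries_fwdDiff (hc : c.support.Finite) (x : AddCircle T) :
    fourierSeries (Δ_[1] c) x = (fourier (-1) x - 1) • fourierSeries c x := by
  have hsum := hasSum_fourierSeries hc x
  have hshift : HasSum (fun n => fourier (n + 1) x • c (n + 1)) (fourierSeries c x) :=
    (Equiv.addRight (1 : ℤ)).hasSum_iff.mpr hsum
  have hdiff := (hshift.const_smul (fourier (-1) x)).sub hsum
  rw [sub_smul, one_smul, ← hdiff.tsum_eq]
  refine tsum_congr fun n => ?_
  rw [smul_smul, ← fourier_add, neg_add_cancel_comm_assoc, fwdDiff, smul_sub]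

end Characters

section LocalizedSymbols

variable {T : ℝ} {E : Type*} [NormedAddCommGroup E] {N : ℕ} {B : ℝ} {m : ℤ → E}

/-- A symbol living at frequencies at most `N` and varying at scale `N`: up to the factor `B`, it
behaves like `n ↦ ψ (n / N)` with `ψ` twice continuously differentiable and supported in
`[-1, 1]`. -/
structure IsLocalizedSymbol (N : ℕ) (B : ℝ) (m : ℤ → E) : Prop where
  eq_zero : ∀ n : ℤ, N < |n| → m n = 0
  norm_le : ∀ n, ‖m n‖ ≤ B
  norm_fwdDiff_fwdDiff_le : ∀ n, ‖Δ_[1] (Δ_[1] m) n‖ ≤ B / N ^ 2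

namespace IsLocalizedSymbol

lemma support_subset (hm : IsLocalizedSymbol N B m) :
    m.support ⊆ Finset.Icc (-N : ℤ) N := fun n hn => by
  rw [Finset.coe_Icc, Set.mem_Icc, ← abs_le]
  exact not_lt.mp fun h => hn (hm.eq_zero n h)

lemma support_finite (hm : IsLocalizedSymbol N B m) : m.support.Finite :=
  (Finset.finite_toSet _).subset hm.support_subset

variable [NormedSpace ℂ E]

lemma norm_fourierSeries_le (hm : IsLocalizedSymbol N B m) (hN : 1 ≤ N) (x : AddCircle T) :
    ‖fourierSeries m x‖ ≤ 3 * N * B := by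
  have hcard : ((Finset.Icc (-N : ℤ) N).card : ℝ) ≤ 3 * N := by
    rw [Int.card_Icc]
    exact_mod_cast (by omega : (N + 1 - -N : ℤ).toNat ≤ 3 * N)
  exact (norm_fourierSeries_le_card_mul hm.support_subset hm.norm_le x).trans
    (by gcongr; exact (norm_nonneg _).trans (hm.norm_le 0))

lemma norm_fourierSeries_fwdDiff_fwdDiff_le (hm : IsLocalizedSymbol N B m) (hN : 1 ≤ N)
    (x : AddCircle T) : ‖fourierSeries (Δ_[1] (Δ_[1] m)) x‖ ≤ 5 * N * (B / N ^ 2) := by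
  have hsupport : (Δ_[1] (Δ_[1] m)).support ⊆ Finset.Icc (-N - 2 : ℤ) N := fun n hn => by
    by_contra hmem
    rw [Finset.coe_Icc, Set.mem_Icc] at hmem
    refine hn ?_
    simp only [fwdDiff, hm.eq_zero n (by rw [lt_abs]; omega),
      hm.eq_zero (n + 1) (by rw [lt_abs]; omega), hm.eq_zero (n + 1 + 1) (by rw [lt_abs]; omega),
      sub_self]
  have hcard : ((Finset.Icc (-N - 2 : ℤ) N).card : ℝ) ≤ 5 * N := by
    rw [Int.card_Icc]
    exact_mod_cast (by omega : (N + 1 - (-N - 2) : ℤ).toNat ≤ 5 * N)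
  exact (norm_fourierSeries_le_card_mul hsupport hm.norm_fwdDiff_fwdDiff_le x).trans
    (by gcongr; exact (norm_nonneg _).trans (hm.norm_fwdDiff_fwdDiff_le 0))

variable [hT : Fact (0 < T)]

lemma sq_mul_norm_fourierSeries_le (hm : IsLocalizedSymbol N B m) (hN : 1 ≤ N)
    (x : AddCircle T) : 16 * (N * ‖x‖ / T) ^ 2 * ‖fourierSeries m x‖ ≤ 5 * N * B := by
  have hT := hT.out
  have hlower : 4 * (‖x‖ / T) ≤ ‖fourier (-1) x - 1‖ := by
    simpa using mul_norm_le_norm_fourier_one_sub_one (-x)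
  have hparts : ‖fourier (-1) x - 1‖ ^ 2 * ‖fourierSeries m x‖ ≤ 5 * N * (B / N ^ 2) := by
    have h := hm.norm_fourierSeries_fwdDiff_fwdDiff_le hN x
    rwa [fourierSeries_fwdDiff (support_fwdDiff_finite hm.support_finite),
      fourierSeries_fwdDiff hm.support_finite, smul_smul, ← pow_two, norm_smul, norm_pow] at h
  calc 16 * (N * ‖x‖ / T) ^ 2 * ‖fourierSeries m x‖
      = N ^ 2 * ((4 * (‖x‖ / T)) ^ 2 * ‖fourierSeries m x‖) := by ring
    _ ≤ N ^ 2 * (‖fourier (-1) x - 1‖ ^ 2 * ‖fourierSeries m x‖) := by gcongr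
    _ ≤ N ^ 2 * (5 * N * (B / N ^ 2)) := mul_le_mul_of_nonneg_left hparts (by positivity)
    _ = 5 * N * B := by field_simp

lemma norm_fourierSeries_le_decay (hm : IsLocalizedSymbol N B m) (hN : 1 ≤ N)
    (x : AddCircle T) :
    ‖fourierSeries m x‖ ≤ 7 * N * B * (1 + N * ‖x‖ / T) ^ (-2 : ℝ) := by
  have hT := hT.out
  have hsup := hm.norm_fourierSeries_le hN x
  have hsq := hm.sq_mul_norm_fourierSeries_le hN x
  rw [Real.rpow_neg (by positivity), ← div_eq_mul_inv, le_div_iff₀ (by positivity),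
    Real.rpow_two]
  have hsplit : (1 + N * ‖x‖ / T) ^ 2 ≤ 2 + 2 * (N * ‖x‖ / T) ^ 2 := by
    nlinarith [sq_nonneg (1 - N * ‖x‖ / T)]
  nlinarith [mul_le_mul_of_nonneg_left hsplit (norm_nonneg (fourierSeries m x))]

end IsLocalizedSymbol

end LocalizedSymbols

/-! ### Fourier multipliers with localized symbols -/

section FourierCoeff

variable {T : ℝ} [hT : Fact (0 < T)] {E F : Type*} [NormedAddCommGroup E] [NormedSpace ℂ E]
  [NormedAddCommGroup F] [NormedSpace ℂ F]

omit [NormedSpace ℂ E] in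
lemma integrable_haarAddCircle_of_continuous {g : AddCircle T → E} (hg : Continuous g) :
    Integrable g haarAddCircle :=
  hg.integrable_of_hasCompactSupport (.of_compactSpace _)

lemma fourierCoeff_fourierSeries [CompleteSpace E] {c : ℤ → E} (hc : c.support.Finite) :
    fourierCoeff (fourierSeries c : AddCircle T → E) = c := by
  have hS : c.support ⊆ hc.toFinset := hc.coe_toFinset.ge
  funext k
  have hterm (n : ℤ) : ∫ x : AddCircle T, fourier (-k) x • fourier n x • c n ∂haarAddCircle =
      (Pi.single n (1 : ℂ) : ℤ → ℂ) k • c n := by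
    simp_rw [← fourierCoeff_fourier (T := T), fourierCoeff, ← smul_assoc, integral_smul_const]
  simp_rw [fourierCoeff, fourierSeries_eq_sum hS, Finset.smul_sum]
  rw [integral_finsetSum _ fun n _ => integrable_haarAddCircle_of_continuous (by fun_prop)]
  simp_rw [hterm, Pi.single_apply, ite_smul, one_smul, zero_smul]
  rw [Finset.sum_ite_eq, ite_eq_left_iff]
  exact fun hk => (notMem_support.mp fun h => hk (hS h)).symm

lemma fourier_smul_fourierCoeff (f : AddCircle T → E) (n : ℤ) (t : AddCircle T) :
    fourier n t • fourierCoeff f n = ∫ s, fourier n s • f (t - s) ∂haarAddCircle := by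
  rw [fourierCoeff, ← integral_smul,
    ← integral_sub_left_eq_self (fun s => fourier n t • fourier (-n) s • f s) _ t]
  refine integral_congr_ae (.of_forall fun s => ?_)
  have hchar : fourier n t * fourier (-n) (t - s) = fourier n s := by
    rw [fourier_apply, fourier_apply, fourier_apply, ← Circle.coe_mul, ← AddCircle.toCircle_add]
    congr 2
    module
  simp only [smul_smul, hchar]

/-- The Fourier multiplier with operator-valued symbol `m`, applied to `f`. -/
def fourierMultiplier (m : ℤ → E →L[ℂ] F) (f : AddCircle T → E) : AddCircle T → F :=
  fourierSeries fun n => m n (fourierCoeff f n)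

variable {m : ℤ → E →L[ℂ] F} {f : AddCircle T → E}

lemma support_apply_subset (m : ℤ → E →L[ℂ] F) (c : ℤ → E) :
    (fun n => m n (c n)).support ⊆ m.support :=
  fun n hn hmn => hn (by simp only [hmn, zero_apply])

lemma fourierMultiplier_eq_integral [CompleteSpace E] [CompleteSpace F] (hm : m.support.Finite)
    (hf : Continuous f) (t : AddCircle T) :
    fourierMultiplier m f t = ∫ s, fourierSeries m s (f (t - s)) ∂haarAddCircle := by
  have hterm (n : ℤ) : fourier n t • m n (fourierCoeff f n) =
      ∫ s, fourier n s • m n (f (t - s)) ∂haarAddCircle := by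
    rw [← map_smul, fourier_smul_fourierCoeff, ← ContinuousLinearMap.integral_comp_comm _
      (integrable_haarAddCircle_of_continuous (by fun_prop))]
    simp_rw [map_smul]
  have hS : m.support ⊆ hm.toFinset := hm.coe_toFinset.ge
  rw [fourierMultiplier, fourierSeries_eq_sum ((support_apply_subset m _).trans hS)]
  simp_rw [hterm, fourierSeries_eq_sum hS, sum_apply,
    smul_apply]
  exact (integral_finsetSum _ fun n _ =>
    integrable_haarAddCircle_of_continuous (by fun_prop)).symm

/-- Since `m 0 = 0`, the kernel has mean zero, so that `f t` may be subtracted. -/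
lemma fourierMultiplier_eq_integral_sub [CompleteSpace E] [CompleteSpace F]
    (hm : m.support.Finite) (hm₀ : m 0 = 0) (hf : Continuous f) (t : AddCircle T) :
    fourierMultiplier m f t =
      ∫ s, fourierSeries m s (f (t - s) - f t) ∂haarAddCircle := by
  have hcont := continuous_fourierSeries (T := T) hm
  have hmean : ∫ s : AddCircle T, fourierSeries m s (f t) ∂haarAddCircle = 0 := by
    have h := congrFun (fourierCoeff_fourierSeries (T := T) hm) 0
    simp only [fourierCoeff, neg_zero, fourier_zero, one_smul, hm₀] at h
    rw [← ContinuousLinearMap.integral_apply (integrable_haarAddCircle_of_continuous hcont), h,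
      zero_apply]
  simp_rw [map_sub]
  rw [fourierMultiplier_eq_integral hm hf,
    integral_sub (integrable_haarAddCircle_of_continuous (by fun_prop))
      (integrable_haarAddCircle_of_continuous (by fun_prop)), hmean, sub_zero]

lemma integral_haarAddCircle_comp_norm_le {g : ℝ → ℝ} (hg : ∀ x, 0 ≤ x → 0 ≤ g x)
    (hint : Integrable fun x => g |x|) {a : ℝ} (ha : 0 < a) :
    ∫ x : AddCircle T, g (a * ‖x‖ / T) ∂haarAddCircle ≤ a⁻¹ * ∫ x, g |x| := by
  have hT := hT.out
  have hscale : ∫ x, g (|a / T * x|) = (T / a) * ∫ x, g |x| := by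
    rw [Measure.integral_comp_mul_left (fun x => g |x|), inv_div, abs_of_pos (by positivity),
      smul_eq_mul]
  calc ∫ x : AddCircle T, g (a * ‖x‖ / T) ∂haarAddCircle
      = T⁻¹ * ∫ x in (-(T / 2))..(-(T / 2) + T), g (|a / T * x|) := by
        rw [AddCircle.integral_haarAddCircle, smul_eq_mul,
          ← AddCircle.intervalIntegral_preimage T (-(T / 2))]
        congr 1
        refine intervalIntegral.integral_congr fun x hx => ?_
        rw [uIcc_of_le (by linarith), Set.mem_Icc] at hx
        have hnorm : ‖(x : AddCircle T)‖ = |x| := by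
          rw [AddCircle.norm_coe_eq_abs_iff T hT.ne', abs_of_pos hT, abs_le]
          constructor <;> linarith
        simp only [hnorm, abs_mul, abs_div, abs_of_pos ha, abs_of_pos hT]
        congr 1
        ring
    _ ≤ T⁻¹ * ∫ x, g (|a / T * x|) := by
        rw [intervalIntegral.integral_of_le (by linarith)]
        exact mul_le_mul_of_nonneg_left (setIntegral_le_integral
          (hint.comp_mul_left' (R := a / T) (by positivity))
          (.of_forall fun x => hg _ (abs_nonneg _))) (by positivity)
    _ = a⁻¹ * ∫ x, g |x| := by
        rw [hscale]
        field_simp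

end FourierCoeff

section LocalizedMultipliers

variable {T : ℝ} [hT : Fact (0 < T)] {E F : Type*} [NormedAddCommGroup E] [NormedSpace ℂ E]
  [NormedAddCommGroup F] [NormedSpace ℂ F] {N : ℕ} {B : ℝ} {m : ℤ → E →L[ℂ] F}
  {f : AddCircle T → E} {C r : ℝ≥0}

lemma IsLocalizedSymbol.norm_fourierSeries_apply_sub_le (hm : IsLocalizedSymbol N B m) (hN : 1 ≤ N)
    (hf : HolderWith C r f) (t s : AddCircle T) :
    ‖fourierSeries m s (f (t - s) - f t)‖ ≤
      7 * N * B * C * (T / N) ^ (r : ℝ) * (1 + N * ‖s‖ / T) ^ ((r : ℝ) - 2) := by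
  have hT := hT.out
  have hB : 0 ≤ B := (norm_nonneg _).trans (hm.norm_le 0)
  have hkernel := hm.norm_fourierSeries_le_decay hN s
  have hosc : ‖f (t - s) - f t‖ ≤ C * ((T / N) ^ (r : ℝ) * (1 + N * ‖s‖ / T) ^ (r : ℝ)) := by
    have h := hf.dist_le (t - s) t
    rw [dist_eq_norm, dist_eq_norm, sub_sub_cancel_left, norm_neg] at h
    refine h.trans ?_
    rw [← Real.mul_rpow (by positivity) (by positivity)]
    gcongr
    calc ‖s‖ = T / N * (N * ‖s‖ / T) := by field_simp
      _ ≤ T / N * (1 + N * ‖s‖ / T) := by gcongr; linarith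
  calc ‖fourierSeries m s (f (t - s) - f t)‖
      ≤ ‖fourierSeries m s‖ * ‖f (t - s) - f t‖ := ContinuousLinearMap.le_opNorm _ _
    _ ≤ 7 * N * B * (1 + N * ‖s‖ / T) ^ (-2 : ℝ) *
          (C * ((T / N) ^ (r : ℝ) * (1 + N * ‖s‖ / T) ^ (r : ℝ))) := by gcongr
    _ = _ := by
        rw [sub_eq_neg_add, Real.rpow_add (by positivity)]
        ring

lemma integrable_one_add_abs_rpow {a : ℝ} (ha : a < -1) :
    Integrable fun x : ℝ => (1 + |x|) ^ a := by
  simpa using integrable_one_add_norm (E := ℝ) (μ := volume) (r := -a) (by simp; linarith)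

lemma IsLocalizedSymbol.norm_fourierMultiplier_le [CompleteSpace E] [CompleteSpace F]
    (hm : IsLocalizedSymbol N B m) (hN : 1 ≤ N) (hm₀ : m 0 = 0) (hf : HolderWith C r f)
    (hr₀ : 0 < r) (hr₁ : r < 1) (t : AddCircle T) :
    ‖fourierMultiplier m f t‖ ≤
      7 * B * C * (T / N) ^ (r : ℝ) * ∫ x : ℝ, (1 + |x|) ^ ((r : ℝ) - 2) := by
  have hT := hT.out
  have hN₀ : (0 : ℝ) < N := by exact_mod_cast hN
  have hB : 0 ≤ B := (norm_nonneg _).trans (hm.norm_le 0)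
  have hr : (r : ℝ) - 2 < -1 := by linarith [NNReal.coe_lt_one.mpr hr₁]
  have hscaled : ∫ s : AddCircle T, (1 + N * ‖s‖ / T) ^ ((r : ℝ) - 2) ∂haarAddCircle ≤
      (N : ℝ)⁻¹ * ∫ x : ℝ, (1 + |x|) ^ ((r : ℝ) - 2) :=
    integral_haarAddCircle_comp_norm_le (g := fun y => (1 + y) ^ ((r : ℝ) - 2))
      (fun x hx => by positivity) (integrable_one_add_abs_rpow hr) hN₀
  have hcont : Continuous fun s : AddCircle T => (1 + N * ‖s‖ / T) ^ ((r : ℝ) - 2) :=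
    Continuous.rpow_const (by fun_prop) fun s => .inl (by positivity)
  rw [fourierMultiplier_eq_integral_sub hm.support_finite hm₀ (hf.continuous hr₀)]
  calc ‖∫ s, fourierSeries m s (f (t - s) - f t) ∂haarAddCircle‖
      ≤ ∫ s : AddCircle T, 7 * N * B * C * (T / N) ^ (r : ℝ) *
          (1 + N * ‖s‖ / T) ^ ((r : ℝ) - 2) ∂haarAddCircle :=
        norm_integral_le_of_norm_le
          ((integrable_haarAddCircle_of_continuous hcont).const_mul _)
          (.of_forall (hm.norm_fourierSeries_apply_sub_le hN hf t))
    _ ≤ 7 * N * B * C * (T / N) ^ (r : ℝ) *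
          ((N : ℝ)⁻¹ * ∫ x : ℝ, (1 + |x|) ^ ((r : ℝ) - 2)) := by
        rw [integral_const_mul]
        gcongr
    _ = _ := by field_simp

end LocalizedMultipliers

/-! ### Cutting a Mikhlin symbol into localized pieces -/

section Cutoffs

variable {E : Type*} [NormedAddCommGroup E] [NormedSpace ℝ E] {ψ ψ' ψ'' : ℝ → E} {D : ℝ}

lemma norm_sub_le_of_hasDerivAt (hψ : ∀ x, HasDerivAt ψ (ψ' x) x) {K x h : ℝ}
    (hK : ∀ y, |y| ≤ |x| + |h| → ‖ψ' y‖ ≤ K) : ‖ψ (x + h) - ψ x‖ ≤ K * |h| := by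
  have hmem (y : ℝ) (hy : |y| ≤ |x| + |h|) : y ∈ Metric.closedBall (0 : ℝ) (|x| + |h|) := by
    simpa using hy
  simpa using (convex_closedBall (0 : ℝ) (|x| + |h|)).norm_image_sub_le_of_norm_hasDerivWithin_le
    (fun y _ => (hψ y).hasDerivWithinAt) (fun y hy => hK y (by simpa using hy))
    (hmem x (by linarith [abs_nonneg h])) (hmem (x + h) (abs_add_le x h))

lemma norm_deriv_le_mul_abs (hψ' : ∀ x, HasDerivAt ψ' (ψ'' x) x) (hD : ∀ x, ‖ψ'' x‖ ≤ D)
    (h0' : ψ' 0 = 0) (x : ℝ) : ‖ψ' x‖ ≤ D * |x| := by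
  simpa [h0'] using norm_sub_le_of_hasDerivAt hψ' (x := 0) (h := x) fun y _ => hD y

lemma norm_fwdDiff_le (hψ : ∀ x, HasDerivAt ψ (ψ' x) x) (hψ' : ∀ x, HasDerivAt ψ' (ψ'' x) x)
    (hD : ∀ x, ‖ψ'' x‖ ≤ D) (h0' : ψ' 0 = 0) (x h : ℝ) :
    ‖Δ_[h] ψ x‖ ≤ D * (|x| + |h|) * |h| :=
  norm_sub_le_of_hasDerivAt hψ fun y hy => (norm_deriv_le_mul_abs hψ' hD h0' y).trans <|
    mul_le_mul_of_nonneg_left hy ((norm_nonneg _).trans (hD 0))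

lemma norm_fwdDiff_fwdDiff_le (hψ : ∀ x, HasDerivAt ψ (ψ' x) x)
    (hψ' : ∀ x, HasDerivAt ψ' (ψ'' x) x) (hD : ∀ x, ‖ψ'' x‖ ≤ D) (x h : ℝ) :
    ‖Δ_[h] (Δ_[h] ψ) x‖ ≤ D * |h| * |h| :=
  norm_sub_le_of_hasDerivAt (fun y => ((hψ (y + h)).comp_add_const y h).sub (hψ y)) fun _ _ =>
    norm_sub_le_of_hasDerivAt hψ' fun z _ => hD z

end Cutoffs

section MikhlinSymbols

variable {E : Type*} [NormedAddCommGroup E] {M : ℤ → E} {C : ℝ}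

/-- A symbol satisfying the discrete Mikhlin conditions of order two with constant `C`. -/
structure IsMikhlinSymbol (C : ℝ) (M : ℤ → E) : Prop where
  norm_le : ∀ n, ‖M n‖ ≤ C
  norm_fwdDiff_le : ∀ n : ℤ, (1 + |(n : ℝ)|) * ‖Δ_[1] M n‖ ≤ C
  norm_fwdDiff_fwdDiff_le : ∀ n : ℤ, (1 + |(n : ℝ)|) ^ 2 * ‖Δ_[1] (Δ_[1] M) n‖ ≤ C

/-- The support and difference bounds enjoyed by a sequence `a n = ψ (n / N)`, where `ψ` is a `C²`
function supported in `[-1, 1]` with `ψ 0 = ψ' 0 = 0` and `‖ψ''‖ ≤ D`. -/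
structure IsCutoff (N : ℕ) (D : ℝ) (a : ℤ → ℂ) : Prop where
  eq_zero : ∀ n : ℤ, N < |n| → a n = 0
  norm_le : ∀ n : ℤ, ‖a n‖ ≤ D * ((1 + |(n : ℝ)|) / N) ^ 2
  norm_fwdDiff_le : ∀ n : ℤ, ‖Δ_[1] a n‖ ≤ D * (1 + |(n : ℝ)|) / N ^ 2
  norm_fwdDiff_fwdDiff_le : ∀ n : ℤ, ‖Δ_[1] (Δ_[1] a) n‖ ≤ D / N ^ 2

lemma exists_isCutoff {ψ : ℝ → ℂ} (hψ : ContDiff ℝ 2 ψ) (hsupp : ∀ x, 1 < |x| → ψ x = 0)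
    (h0 : ψ 0 = 0) (h0' : deriv ψ 0 = 0) :
    ∃ D, ∀ N : ℕ, 1 ≤ N → IsCutoff N D fun n => ψ (n / N) := by
  have hψ₁ : ContDiff ℝ 1 (deriv ψ) := hψ.deriv'
  have hd (x : ℝ) : HasDerivAt ψ (deriv ψ x) x :=
    (hψ.differentiable (by norm_num) x).hasDerivAt
  have hd' (x : ℝ) : HasDerivAt (deriv ψ) (deriv (deriv ψ) x) x :=
    (hψ₁.differentiable (by norm_num) x).hasDerivAt
  have hcompact : HasCompactSupport ψ := by
    refine .intro (isCompact_Icc (a := -1) (b := 1)) fun x hx => hsupp x ?_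
    rwa [Set.mem_Icc, ← abs_le, not_le] at hx
  obtain ⟨D, hD⟩ := hcompact.deriv.deriv.exists_bound_of_continuous
    (hψ₁.continuous_deriv le_rfl)
  have hfirst := norm_fwdDiff_le hd hd' hD h0'
  refine ⟨D, fun N hN => ?_⟩
  have hN₀ : (0 : ℝ) < N := by exact_mod_cast hN
  have hD₀ : 0 ≤ D := (norm_nonneg _).trans (hD 0)
  have hshift (n : ℤ) : ((n + 1 : ℤ) : ℝ) / N = n / N + 1 / N := by push_cast; ring
  refine ⟨fun n hn => hsupp _ ?_, fun n => ?_, fun n => ?_, fun n => ?_⟩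
  · rw [abs_div, Nat.abs_cast, one_lt_div hN₀]
    exact_mod_cast hn
  · have h := hfirst 0 (n / N)
    rw [fwdDiff, zero_add, h0, sub_zero, abs_zero, zero_add, mul_assoc, ← pow_two, abs_div,
      Nat.abs_cast] at h
    refine h.trans ?_
    gcongr
    linarith
  · have h := hfirst (n / N) (1 / N)
    rw [fwdDiff, ← hshift, abs_div, abs_div, Nat.abs_cast, abs_one] at h
    exact h.trans (by apply le_of_eq; ring)
  · have h := norm_fwdDiff_fwdDiff_le hd hd' hD (n / N) (1 / N)
    simp only [fwdDiff, ← hshift] at h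
    rw [abs_div, Nat.abs_cast, abs_one] at h
    exact h.trans (by apply le_of_eq; ring)

variable {N : ℕ} {D : ℝ} {a : ℤ → ℂ}

lemma one_add_abs_le_two_mul_one_add_abs_add_one (n : ℤ) :
    1 + |(n : ℝ)| ≤ 2 * (1 + |((n + 1 : ℤ) : ℝ)|) := by
  push_cast
  linarith [abs_sub_abs_le_abs_add (n : ℝ) 1, abs_nonneg ((n : ℝ) + 1), abs_one (α := ℝ)]

lemma IsMikhlinSymbol.norm_fwdDiff_add_one_le (hM : IsMikhlinSymbol C M) (n : ℤ) :
    (1 + |(n : ℝ)|) * ‖Δ_[1] M (n + 1)‖ ≤ 2 * C :=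
  calc (1 + |(n : ℝ)|) * ‖Δ_[1] M (n + 1)‖
      ≤ 2 * (1 + |((n + 1 : ℤ) : ℝ)|) * ‖Δ_[1] M (n + 1)‖ := by
        gcongr
        exact one_add_abs_le_two_mul_one_add_abs_add_one n
    _ ≤ 2 * C := by linarith [hM.norm_fwdDiff_le (n + 1)]

lemma IsCutoff.nonneg (ha : IsCutoff N D a) (hN : 1 ≤ N) : 0 ≤ D := by
  have h := (norm_nonneg _).trans (ha.norm_fwdDiff_fwdDiff_le 0)
  rwa [le_div_iff₀ (by positivity), zero_mul] at h

lemma IsCutoff.norm_le_four_mul (ha : IsCutoff N D a) (hN : 1 ≤ N) (n : ℤ) : ‖a n‖ ≤ 4 * D := by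
  have hD := ha.nonneg hN
  have hN₁ : (1 : ℝ) ≤ N := by exact_mod_cast hN
  by_cases hn : N < |n|
  · rw [ha.eq_zero n hn, norm_zero]
    positivity
  have hn' : |(n : ℝ)| ≤ N := by exact_mod_cast not_lt.mp hn
  have hratio : (1 + |(n : ℝ)|) / N ≤ 2 := by
    rw [div_le_iff₀ (by positivity)]
    linarith
  calc ‖a n‖ ≤ D * ((1 + |(n : ℝ)|) / N) ^ 2 := ha.norm_le n
    _ ≤ D * 2 ^ 2 := by gcongr
    _ = 4 * D := by ring

variable [NormedSpace ℂ E]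

lemma fwdDiff_fwdDiff_smul (a : ℤ → ℂ) (M : ℤ → E) (n : ℤ) :
    Δ_[1] (Δ_[1] fun k => a k • M k) n = a n • Δ_[1] (Δ_[1] M) n
      + (2 : ℂ) • Δ_[1] a n • Δ_[1] M (n + 1) + Δ_[1] (Δ_[1] a) n • M (n + 1 + 1) := by
  simp only [fwdDiff]
  module

lemma IsCutoff.isLocalizedSymbol_smul (ha : IsCutoff N D a) (hN : 1 ≤ N)
    (hM : IsMikhlinSymbol C M) : IsLocalizedSymbol N (6 * D * C) fun n => a n • M n := by
  have hD := ha.nonneg hN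
  have hC : 0 ≤ C := (norm_nonneg _).trans (hM.norm_le 0)
  refine ⟨fun n hn => by rw [ha.eq_zero n hn, zero_smul], fun n => ?_, fun n => ?_⟩
  · calc ‖a n • M n‖ = ‖a n‖ * ‖M n‖ := norm_smul _ _
      _ ≤ 4 * D * C := by
        gcongr
        exacts [ha.norm_le_four_mul hN n, hM.norm_le n]
      _ ≤ 6 * D * C := by gcongr; norm_num
  · set k : ℝ := 1 + |(n : ℝ)|
    have hk : 0 < k := by positivity
    have hM₁ : ‖Δ_[1] M (n + 1)‖ ≤ 2 * C / k := by
      rw [le_div_iff₀' hk]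
      exact hM.norm_fwdDiff_add_one_le n
    have hM₂ : ‖Δ_[1] (Δ_[1] M) n‖ ≤ C / k ^ 2 := by
      rw [le_div_iff₀' (by positivity)]
      exact hM.norm_fwdDiff_fwdDiff_le n
    rw [fwdDiff_fwdDiff_smul]
    refine norm_add₃_le.trans ?_
    simp only [norm_smul, Complex.norm_ofNat]
    calc ‖a n‖ * ‖Δ_[1] (Δ_[1] M) n‖ + 2 * (‖Δ_[1] a n‖ * ‖Δ_[1] M (n + 1)‖)
          + ‖Δ_[1] (Δ_[1] a) n‖ * ‖M (n + 1 + 1)‖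
        ≤ D * (k / N) ^ 2 * (C / k ^ 2) + 2 * (D * k / N ^ 2 * (2 * C / k)) + D / N ^ 2 * C := by
          gcongr
          exacts [ha.norm_le n, ha.norm_fwdDiff_le n, ha.norm_fwdDiff_fwdDiff_le n, hM.norm_le _]
      _ = 6 * D * C / N ^ 2 := by field_simp; ring

end MikhlinSymbols

/-! ### Hölder continuity -/

section Holder

variable {X Y : Type*} [PseudoMetricSpace X] [PseudoMetricSpace Y] {r : ℝ≥0}

lemma exists_holderWith_of_dist_le {f : X → Y} {K : ℝ}
    (h : ∀ x y, dist (f x) (f y) ≤ K * dist x y ^ (r : ℝ)) : ∃ C, HolderWith C r f := by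
  refine ⟨K.toNNReal, fun x y => ?_⟩
  rw [edist_nndist, edist_nndist, ← ENNReal.coe_rpow_of_nonneg _ r.coe_nonneg, ← ENNReal.coe_mul,
    ENNReal.coe_le_coe, ← NNReal.coe_le_coe]
  push_cast
  exact (h x y).trans (mul_le_mul_of_nonneg_right (Real.le_coe_toNNReal K) (by positivity))

lemma holderWith_of_comp_coe {T : ℝ} {f : AddCircle T → Y} {C : ℝ≥0}
    (h : HolderWith C r fun t : ℝ => f t) : HolderWith C r f := by
  intro x y
  obtain ⟨d, hd, hnorm⟩ := exists_coe_eq_abs_eq_norm (x - y)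
  obtain ⟨t, rfl⟩ := QuotientAddGroup.mk_surjective y
  obtain rfl : ((t + d : ℝ) : AddCircle T) = x := by
    rw [AddCircle.coe_add, hd]
    exact add_sub_cancel _ _
  have hdist : edist (t + d) t = edist ((t + d : ℝ) : AddCircle T) (t : AddCircle T) := by
    rw [edist_dist, edist_dist, Real.dist_eq, dist_eq_norm ((t + d : ℝ) : AddCircle T),
      ← AddCircle.coe_sub, add_sub_cancel_left, hd, hnorm]
  exact hdist ▸ h (t + d) t

lemma summable_min_geometric {q : ℝ} (hq₀ : 0 ≤ q) (hq₁ : q < 1) {d : ℝ} (hd : 0 ≤ d) :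
    Summable fun j : ℕ => min (q ^ j) ((2 * q) ^ j * d) :=
  .of_nonneg_of_le (fun j => by positivity) (fun j => min_le_left _ _)
    (summable_geometric_of_lt_one hq₀ hq₁)

lemma tsum_min_geometric_le {q : ℝ} (hq₀ : 1 / 2 < q) (hq₁ : q < 1) {d : ℝ} (hd : 0 ≤ d) {J : ℕ}
    (hdJ : d ≤ (1 / 2) ^ J) :
    ∑' j : ℕ, min (q ^ j) ((2 * q) ^ j * d) ≤ q ^ J * (1 / (2 * q - 1) + 1 / (1 - q)) := by
  have hsummable := summable_min_geometric (by linarith) hq₁ hd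
  have hlow : ∑ j ∈ Finset.range J, min (q ^ j) ((2 * q) ^ j * d) ≤ q ^ J * (1 / (2 * q - 1)) :=
    calc ∑ j ∈ Finset.range J, min (q ^ j) ((2 * q) ^ j * d)
        ≤ ∑ j ∈ Finset.range J, (2 * q) ^ j * d := by gcongr; exact min_le_right _ _
      _ = ((2 * q) ^ J - 1) * d * (1 / (2 * q - 1)) := by
        rw [← Finset.sum_mul, geom_sum_eq (by linarith)]
        ring
      _ ≤ (2 * q) ^ J * (1 / 2) ^ J * (1 / (2 * q - 1)) := by
        gcongr
        · exact one_div_nonneg.mpr (by linarith)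
        · exact sub_le_self _ zero_le_one
      _ = q ^ J * (1 / (2 * q - 1)) := by
        rw [← mul_pow]
        ring
  have hhigh : ∑' j, min (q ^ (j + J)) ((2 * q) ^ (j + J) * d) ≤ q ^ J * (1 / (1 - q)) :=
    calc ∑' j, min (q ^ (j + J)) ((2 * q) ^ (j + J) * d)
        ≤ ∑' j, q ^ J * q ^ j := by
          refine Summable.tsum_le_tsum (fun j => (min_le_left _ _).trans_eq (by ring))
            ((summable_nat_add_iff J).mpr hsummable)
            ((summable_geometric_of_lt_one (by linarith) hq₁).mul_left _)
      _ = q ^ J * (1 / (1 - q)) := by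
        rw [tsum_mul_left, tsum_geometric_of_lt_one (by linarith) hq₁, one_div]
  rw [← hsummable.sum_add_tsum_nat_add J, mul_add]
  exact add_le_add hlow hhigh

lemma exists_tsum_min_geometric_le (hr₀ : 0 < r) (hr₁ : r < 1) :
    ∃ K : ℝ, ∀ d : ℝ, 0 ≤ d →
      ∑' j : ℕ, min (((1 / 2 : ℝ) ^ (r : ℝ)) ^ j) ((2 * (1 / 2 : ℝ) ^ (r : ℝ)) ^ j * d) ≤
        K * d ^ (r : ℝ) := by
  have hr₀' : 0 < (r : ℝ) := hr₀
  have hr₁' : (r : ℝ) < 1 := hr₁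
  set q : ℝ := (1 / 2) ^ (r : ℝ) with hq
  have hq₀ : 1 / 2 < q := by
    simpa [hq] using Real.rpow_lt_rpow_of_exponent_gt (x := 1 / 2) (by norm_num) (by norm_num) hr₁'
  have hq₁ : q < 1 := Real.rpow_lt_one (by norm_num) (by norm_num) hr₀'
  have hA : 0 ≤ 1 / (2 * q - 1) := one_div_nonneg.mpr (by linarith)
  refine ⟨q⁻¹ * (1 / (2 * q - 1) + 1 / (1 - q)), fun d hd => ?_⟩
  rcases hd.eq_or_lt with rfl | hd₀
  · have hmin (j : ℕ) : min (q ^ j) ((2 * q) ^ j * 0) = 0 := by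
      rw [mul_zero, min_eq_right (by positivity)]
    rw [tsum_congr hmin, tsum_zero, Real.zero_rpow hr₀'.ne', mul_zero]
  rcases le_total d 1 with hd₁ | hd₁
  · obtain ⟨J, hJ, hJ'⟩ := exists_nat_pow_near_of_lt_one hd₀ hd₁ (y := (1 / 2 : ℝ)) (by norm_num)
      (by norm_num)
    have hqJ : q ^ J ≤ q⁻¹ * d ^ (r : ℝ) := by
      rw [← div_eq_inv_mul, le_div_iff₀ (by positivity), ← pow_succ, hq, ← Real.rpow_mul_natCast
        (by norm_num), mul_comm, Real.rpow_natCast_mul (by norm_num)]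
      gcongr
    calc ∑' j : ℕ, min (q ^ j) ((2 * q) ^ j * d)
        ≤ q ^ J * (1 / (2 * q - 1) + 1 / (1 - q)) := tsum_min_geometric_le hq₀ hq₁ hd hJ'
      _ ≤ q⁻¹ * d ^ (r : ℝ) * (1 / (2 * q - 1) + 1 / (1 - q)) := by gcongr
      _ = _ := by ring
  · have hq_inv : 1 ≤ q⁻¹ := one_le_inv_iff₀.mpr ⟨by linarith, hq₁.le⟩
    have hd_rpow : 1 ≤ d ^ (r : ℝ) := Real.one_le_rpow hd₁ hr₀'.le
    calc ∑' j : ℕ, min (q ^ j) ((2 * q) ^ j * d)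
        ≤ ∑' j : ℕ, q ^ j :=
          (summable_min_geometric (by linarith) hq₁ hd).tsum_le_tsum (fun j => min_le_left _ _)
            (summable_geometric_of_lt_one (by linarith) hq₁)
      _ = 1 * (0 + 1 / (1 - q)) * 1 := by
        rw [tsum_geometric_of_lt_one (by linarith) hq₁]
        ring
      _ ≤ q⁻¹ * (1 / (2 * q - 1) + 1 / (1 - q)) * d ^ (r : ℝ) := by gcongr

/-- The easy half of the Littlewood–Paley description of Hölder spaces. -/
lemma exists_holderWith_tsum_dyadic {E : Type*} [NormedAddCommGroup E] [CompleteSpace E]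
    {v : ℕ → X → E} {A : ℝ} (hr₀ : 0 < r) (hr₁ : r < 1)
    (hnorm : ∀ j x, ‖v j x‖ ≤ A * ((1 / 2 : ℝ) ^ (r : ℝ)) ^ j)
    (hdist : ∀ j x y, dist (v j x) (v j y) ≤ A * (2 * (1 / 2 : ℝ) ^ (r : ℝ)) ^ j * dist x y) :
    ∃ C, HolderWith C r fun x => ∑' j, v j x := by
  obtain ⟨K, hK⟩ := exists_tsum_min_geometric_le hr₀ hr₁
  set q : ℝ := (1 / 2) ^ (r : ℝ)
  have hq₀ : 0 ≤ q := by positivity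
  have hq₁ : q < 1 := Real.rpow_lt_one (by norm_num) (by norm_num) hr₀
  have hsummable (x : X) : Summable fun j => v j x :=
    .of_norm_bounded ((summable_geometric_of_lt_one hq₀ hq₁).mul_left A) (hnorm · x)
  refine exists_holderWith_of_dist_le (K := 2 * A * K) fun x y => ?_
  have hA : 0 ≤ A := by simpa using (norm_nonneg _).trans (hnorm 0 x)
  have hmin (j : ℕ) : ‖v j x - v j y‖ ≤ 2 * A * min (q ^ j) ((2 * q) ^ j * dist x y) := by
    rw [mul_min_of_nonneg _ _ (by positivity), le_min_iff]
    refine ⟨by linarith [norm_sub_le (v j x) (v j y), hnorm j x, hnorm j y], ?_⟩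
    rw [← dist_eq_norm]
    exact (hdist j x y).trans (by rw [mul_assoc]; gcongr; linarith)
  have hsummable_min := summable_min_geometric hq₀ hq₁ (dist_nonneg (x := x) (y := y))
  rw [dist_eq_norm, ← (hsummable x).tsum_sub (hsummable y)]
  calc ‖∑' j, (v j x - v j y)‖
      ≤ ∑' j, 2 * A * min (q ^ j) ((2 * q) ^ j * dist x y) :=
        tsum_of_norm_bounded (hsummable_min.mul_left _).hasSum hmin
    _ ≤ 2 * A * (K * dist x y ^ (r : ℝ)) := by
        rw [tsum_mul_left]
        gcongr
        exact hK _ dist_nonneg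
    _ = _ := by ring

end Holder

/-! ### Mikhlin multipliers on Hölder spaces -/

section DyadicPartition

lemma exists_dyadic_partition :
    ∃ η : ℝ → ℂ, ContDiff ℝ 2 η ∧ (∀ x, 1 < |x| → η x = 0) ∧ η =ᶠ[𝓝 0] 0 ∧
      ∀ x, 1 ≤ |x| → HasSum (fun j : ℕ => η (x / 2 ^ j)) 1 := by
  let bump : ContDiffBump (0 : ℝ) := ⟨1 / 4, 1, by norm_num, by norm_num⟩
  let φ (x : ℝ) : ℂ := bump x
  have hφ : ContDiff ℝ 2 φ := Complex.ofRealCLM.contDiff.comp bump.contDiff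
  have hφ_one {x : ℝ} (hx : |x| ≤ 1 / 4) : φ x = 1 := by
    simp only [φ, bump.one_of_mem_closedBall (by simpa [bump] using hx), Complex.ofReal_one]
  have hφ_zero {x : ℝ} (hx : 1 ≤ |x|) : φ x = 0 := by
    simp only [φ, bump.zero_of_le_dist (by simpa [bump] using hx), Complex.ofReal_zero]
  refine ⟨fun x => φ x - φ (2 * x), by fun_prop, fun x hx => ?_, ?_, fun x hx => ?_⟩
  · simp only [hφ_zero hx.le, hφ_zero (show 1 ≤ |2 * x| by rw [abs_mul, abs_two]; linarith),
      sub_zero]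
  · filter_upwards [Metric.ball_mem_nhds (0 : ℝ) (by norm_num : (0 : ℝ) < 1 / 8)] with x hx
    rw [mem_ball_zero_iff, Real.norm_eq_abs] at hx
    rw [hφ_one (by linarith), hφ_one (by rw [abs_mul, abs_two]; linarith), sub_self, Pi.zero_apply]
  · let g (j : ℕ) : ℂ := φ (2 * x / 2 ^ j)
    have htelescope (j : ℕ) : φ (x / 2 ^ j) - φ (2 * (x / 2 ^ j)) = g (j + 1) - g j := by
      simp only [g, pow_succ', mul_div_mul_left _ _ (two_ne_zero' ℝ), ← mul_div_assoc]
    obtain ⟨J, hJ⟩ := exists_nat_ge (8 * |x|)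
    have hg_one {j : ℕ} (hj : J ≤ j) : g j = 1 := hφ_one <| by
      have hpow : (J : ℝ) ≤ 2 ^ j := by exact_mod_cast hj.trans Nat.lt_two_pow_self.le
      rw [abs_div, abs_mul, abs_two, abs_pow, abs_two, div_le_iff₀ (by positivity)]
      linarith
    have hg_zero : g 0 = 0 := hφ_zero <| by
      rw [pow_zero, div_one, abs_mul, abs_two]
      linarith
    have hsum : ∑ j ∈ Finset.range J, (g (j + 1) - g j) = 1 := by
      rw [Finset.sum_range_sub, hg_one le_rfl, hg_zero, sub_zero]
    simp only [htelescope]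
    refine hsum ▸ hasSum_sum_of_ne_finset_zero fun j hj => ?_
    rw [Finset.mem_range, not_lt] at hj
    rw [hg_one hj, hg_one (hj.trans j.le_succ), sub_self]

end DyadicPartition

section MultiplierTheorem

variable {T : ℝ} {E F : Type*} [NormedAddCommGroup E] [NormedSpace ℂ E]
  [NormedAddCommGroup F] [NormedSpace ℂ F]

lemma hasDerivAt_fourierSeries {c : ℤ → E} (hc : c.support.Finite) (t : ℝ) :
    HasDerivAt (fun s : ℝ => fourierSeries c (s : AddCircle T))
      (fourierSeries (fun n => (2 * π * Complex.I * n / T) • c n) (t : AddCircle T)) t := by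
  have hS : c.support ⊆ hc.toFinset := hc.coe_toFinset.ge
  rw [fourierSeries_eq_sum (c := fun n : ℤ => _ • c n)
    ((support_smul_subset_right _ c).trans hS)]
  simp_rw [fourierSeries_eq_sum hS, smul_smul]
  refine HasDerivAt.fun_sum fun n _ => ?_
  simpa only [mul_comm] using (hasDerivAt_fourier T n t).smul_const (c n)

lemma dist_le_of_hasDerivAt_comp_coe {f f' : AddCircle T → E} {K : ℝ}
    (hf : ∀ t : ℝ, HasDerivAt (fun s : ℝ => f s) (f' t) t) (hK : ∀ x, ‖f' x‖ ≤ K)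
    (x y : AddCircle T) : dist (f x) (f y) ≤ K * dist x y := by
  lift K to ℝ≥0 using (norm_nonneg _).trans (hK 0)
  have hlip : LipschitzWith K fun t : ℝ => f t :=
    lipschitzWith_of_nnnorm_deriv_le (fun t => (hf t).differentiableAt) fun t => by
      rw [(hf t).deriv]
      exact hK t
  exact (holderWith_one.mp (holderWith_of_comp_coe (holderWith_one.mpr hlip))).dist_le_mul x y

variable [hT : Fact (0 < T)] [CompleteSpace E]

lemma fourierCoeff_const (e : E) : fourierCoeff (fun _ : AddCircle T => e) = Pi.single 0 e := by
  have hfinite : (Pi.single (0 : ℤ) e : ℤ → E).support.Finite :=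
    (Set.finite_singleton 0).subset Pi.support_single_subset
  rw [← fourierCoeff_fourierSeries (T := T) hfinite]
  congr 1
  funext x
  rw [fourierSeries, tsum_eq_single 0 fun n hn => by rw [Pi.single_eq_of_ne hn, smul_zero],
    Pi.single_eq_same, fourier_zero, one_smul]

lemma fourierCoeff_const_add (e : E) {g : AddCircle T → E} (hg : Continuous g) (n : ℤ) :
    fourierCoeff (fun x => e + g x) n = (Pi.single 0 e : ℤ → E) n + fourierCoeff g n := by
  have hadd := fourierCoeff.add (T := T) (integrable_haarAddCircle_of_continuous
    (continuous_const (y := e))) (integrable_haarAddCircle_of_continuous hg)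
  rw [← fourierCoeff_const (T := T)]
  exact congrFun hadd n

lemma hasSum_fourierCoeff_tsum {v : ℕ → AddCircle T → E} {b : ℕ → ℝ}
    (hv : ∀ j, Continuous (v j)) (hb : Summable b) (hvb : ∀ j x, ‖v j x‖ ≤ b j) (n : ℤ) :
    HasSum (fun j => fourierCoeff (v j) n) (fourierCoeff (fun x => ∑' j, v j x) n) := by
  refine hasSum_integral_of_dominated_convergence (fun j _ => b j)
    (fun j => (by fun_prop : Continuous _).aestronglyMeasurable)
    (fun j => .of_forall fun x => ?_) (.of_forall fun _ => hb) (integrable_const _)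
    (.of_forall fun x => (Summable.of_norm_bounded hb (hvb · x)).hasSum.const_smul _)
  rw [norm_smul, norm_fourier_apply, one_mul]
  exact hvb j x

variable [CompleteSpace F] {M : ℤ → E →L[ℂ] F} {C : ℝ} {f : AddCircle T → E} {Cf r : ℝ≥0}

/-- The Littlewood–Paley piece of the multiplier `M` at frequencies of size `2 ^ j`, cut out by
`ψ`. -/
def dyadicBlock (ψ : ℝ → ℂ) (M : ℤ → E →L[ℂ] F) (f : AddCircle T → E) (j : ℕ) :
    AddCircle T → F :=
  fourierMultiplier (fun n => ψ (n / 2 ^ j) • M n) f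

omit [CompleteSpace E] [CompleteSpace F] in
lemma support_dyadic_finite {ψ : ℝ → ℂ} (hsupp : ∀ x, 1 < |x| → ψ x = 0) (c : ℤ → F) (j : ℕ) :
    (fun n : ℤ => ψ (n / 2 ^ j) • c n).support.Finite := by
  refine (Set.finite_Icc (-(2 ^ j) : ℤ) (2 ^ j)).subset fun n hn => ?_
  rw [Set.mem_Icc, ← abs_le]
  by_contra! h
  refine hn ?_
  have habs : 1 < |(n : ℝ) / 2 ^ j| := by
    rw [abs_div, abs_pow, abs_two, one_lt_div (by positivity)]
    exact_mod_cast h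
  simp only [hsupp _ habs, zero_smul]

omit [CompleteSpace E] [CompleteSpace F] in
lemma continuous_dyadicBlock {ψ : ℝ → ℂ} (hsupp : ∀ x, 1 < |x| → ψ x = 0) (M : ℤ → E →L[ℂ] F)
    (f : AddCircle T → E) (j : ℕ) : Continuous (dyadicBlock ψ M f j) :=
  continuous_fourierSeries (support_dyadic_finite hsupp _ j)

omit [CompleteSpace E] in
lemma fourierCoeff_dyadicBlock {ψ : ℝ → ℂ} (hsupp : ∀ x, 1 < |x| → ψ x = 0)
    (M : ℤ → E →L[ℂ] F) (f : AddCircle T → E) (j : ℕ) (n : ℤ) :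
    fourierCoeff (dyadicBlock ψ M f j) n = ψ (n / 2 ^ j) • M n (fourierCoeff f n) :=
  congrFun (fourierCoeff_fourierSeries (support_dyadic_finite hsupp _ j)) n

omit [CompleteSpace E] [CompleteSpace F] in
lemma hasDerivAt_dyadicBlock {ψ : ℝ → ℂ} (hsupp : ∀ x, 1 < |x| → ψ x = 0) (M : ℤ → E →L[ℂ] F)
    (f : AddCircle T → E) (j : ℕ) (t : ℝ) :
    HasDerivAt (fun s : ℝ => dyadicBlock ψ M f j s)
      ((2 * π * Complex.I / T * 2 ^ j : ℂ) • dyadicBlock (fun x => x * ψ x) M f j t) t := by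
  refine (hasDerivAt_fourierSeries (support_dyadic_finite hsupp
    (fun n => M n (fourierCoeff f n)) j) t).congr_deriv ?_
  simp only [dyadicBlock, fourierMultiplier, fourierSeries]
  rw [← tsum_const_smul'']
  refine tsum_congr fun n => ?_
  simp only [smul_apply, smul_smul]
  congr 1
  push_cast
  field_simp

namespace IsMikhlinSymbol

lemma exists_norm_dyadicBlock_le (hM : IsMikhlinSymbol C M) (hf : HolderWith Cf r f) (hr₀ : 0 < r)
    (hr₁ : r < 1) {ψ : ℝ → ℂ} (hψ : ContDiff ℝ 2 ψ) (hsupp : ∀ x, 1 < |x| → ψ x = 0)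
    (h0 : ψ =ᶠ[𝓝 0] 0) :
    ∃ A, ∀ j x, ‖dyadicBlock ψ M f j x‖ ≤ A * ((1 / 2 : ℝ) ^ (r : ℝ)) ^ j := by
  have hT := hT.out
  obtain ⟨D, hD⟩ := exists_isCutoff hψ hsupp h0.eq_of_nhds (by simpa using h0.deriv_eq)
  refine ⟨7 * (6 * D * C) * Cf * T ^ (r : ℝ) * ∫ x : ℝ, (1 + |x|) ^ ((r : ℝ) - 2), fun j x => ?_⟩
  have hpow : 1 ≤ 2 ^ j := Nat.one_le_two_pow
  have hsymbol := (hD (2 ^ j) hpow).isLocalizedSymbol_smul hpow hM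
  have hbound := hsymbol.norm_fourierMultiplier_le hpow (by simp [h0.eq_of_nhds]) hf hr₀ hr₁ x
  push_cast at hbound
  refine hbound.trans_eq ?_
  rw [div_eq_mul_one_div, Real.mul_rpow (by positivity) (by positivity), ← one_div_pow,
    Real.rpow_pow_comm (by norm_num)]
  ring

lemma exists_dist_dyadicBlock_le (hM : IsMikhlinSymbol C M) (hf : HolderWith Cf r f) (hr₀ : 0 < r)
    (hr₁ : r < 1) {ψ : ℝ → ℂ} (hψ : ContDiff ℝ 2 ψ) (hsupp : ∀ x, 1 < |x| → ψ x = 0)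
    (h0 : ψ =ᶠ[𝓝 0] 0) :
    ∃ A, ∀ j x y, dist (dyadicBlock ψ M f j x) (dyadicBlock ψ M f j y) ≤
      A * (2 * (1 / 2 : ℝ) ^ (r : ℝ)) ^ j * dist x y := by
  obtain ⟨A, hA⟩ := hM.exists_norm_dyadicBlock_le hf hr₀ hr₁ (ψ := fun x => x * ψ x)
    (Complex.ofRealCLM.contDiff.mul hψ) (fun x hx => by rw [hsupp x hx, mul_zero])
    (h0.mono fun x hx => by simp only [hx, Pi.zero_apply, mul_zero])
  refine ⟨‖(2 * π * Complex.I / T : ℂ)‖ * A, fun j => dist_le_of_hasDerivAt_comp_coe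
    (f' := fun x => _ • dyadicBlock _ M f j x) (hasDerivAt_dyadicBlock hsupp M f j) fun x => ?_⟩
  rw [norm_smul, norm_mul, norm_pow, Complex.norm_ofNat]
  calc ‖(2 * π * Complex.I / T : ℂ)‖ * 2 ^ j * ‖dyadicBlock (fun x => x * ψ x) M f j x‖
      ≤ ‖(2 * π * Complex.I / T : ℂ)‖ * 2 ^ j * (A * ((1 / 2 : ℝ) ^ (r : ℝ)) ^ j) := by
        gcongr
        exact hA j x
    _ = _ := by ring

theorem exists_holderWith_fourierCoeff_eq (hM : IsMikhlinSymbol C M) (hf : HolderWith Cf r f)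
    (hr₀ : 0 < r) (hr₁ : r < 1) :
    ∃ (u : AddCircle T → F) (Cu : ℝ≥0), HolderWith Cu r u ∧
      ∀ n, fourierCoeff u n = M n (fourierCoeff f n) := by
  obtain ⟨η, hη, hsupp, h0, hη_sum⟩ := exists_dyadic_partition
  obtain ⟨A, hA⟩ := hM.exists_norm_dyadicBlock_le hf hr₀ hr₁ hη hsupp h0
  obtain ⟨L, hL⟩ := hM.exists_dist_dyadicBlock_le hf hr₀ hr₁ hη hsupp h0
  have hcont := continuous_dyadicBlock hsupp M f
  let v (x : AddCircle T) : F := ∑' j, dyadicBlock η M f j x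
  obtain ⟨Cv, hv⟩ : ∃ Cv, HolderWith Cv r v :=
    exists_holderWith_tsum_dyadic (A := max A L) hr₀ hr₁
      (fun j x => (hA j x).trans (by gcongr; exact le_max_left _ _))
      (fun j x y => (hL j x y).trans (by gcongr; exact le_max_right _ _))
  have hcoeff (n : ℤ) : HasSum (fun j : ℕ => η (n / 2 ^ j) • M n (fourierCoeff f n))
      (fourierCoeff v n) := by
    have hgeometric := summable_geometric_of_lt_one (r := (1 / 2 : ℝ) ^ (r : ℝ)) (by positivity)
      (Real.rpow_lt_one (by norm_num) (by norm_num) hr₀)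
    simpa only [fourierCoeff_dyadicBlock hsupp]
      using hasSum_fourierCoeff_tsum hcont (hgeometric.mul_left A) hA n
  have hconst : HolderWith 0 r fun _ : AddCircle T => M 0 (fourierCoeff f 0) := .const
  refine ⟨fun x => M 0 (fourierCoeff f 0) + v x, 0 + Cv, hconst.add hv, fun n => ?_⟩
  rw [fourierCoeff_const_add _ (hv.continuous hr₀)]
  rcases eq_or_ne n 0 with rfl | hn
  · have hzero := hcoeff 0
    simp only [Int.cast_zero, zero_div, h0.eq_of_nhds, Pi.zero_apply, zero_smul] at hzero
    rw [Pi.single_eq_same, hzero.unique hasSum_zero, add_zero]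
  · have hpartition := (hη_sum n (by exact_mod_cast Int.one_le_abs hn)).smul_const
      (M n (fourierCoeff f n))
    rw [Pi.single_eq_of_ne hn, zero_add, (hcoeff n).unique hpartition, one_smul]

end IsMikhlinSymbol

end MultiplierTheorem

/-! ### Fourier coefficients, uniqueness and derivatives -/

section FourierUniqueness

variable {T : ℝ} [hT : Fact (0 < T)] {E F : Type*} [NormedAddCommGroup E] [NormedSpace ℂ E]
  [CompleteSpace E] [NormedAddCommGroup F] [NormedSpace ℂ F] [CompleteSpace F]

lemma fourierCoeff_clm_comp (L : E →L[ℂ] F) {f : AddCircle T → E} (hf : Continuous f) (n : ℤ) :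
    fourierCoeff (fun x => L (f x)) n = L (fourierCoeff f n) := by
  simp_rw [fourierCoeff, ← map_smul]
  exact L.integral_comp_comm (integrable_haarAddCircle_of_continuous (by fun_prop))

lemma eq_of_forall_fourierCoeff_eq {f g : AddCircle T → E} (hf : Continuous f) (hg : Continuous g)
    (h : ∀ n, fourierCoeff f n = fourierCoeff g n) : f = g := by
  funext x
  refine (SeparatingDual.eq_iff_forall_dual_eq (R := ℂ)).mpr fun φ => ?_
  let φf : C(AddCircle T, ℂ) := ⟨fun y => φ (f y), by fun_prop⟩
  let φg : C(AddCircle T, ℂ) := ⟨fun y => φ (g y), by fun_prop⟩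
  have hLp : ContinuousMap.toLp 2 haarAddCircle ℂ φf = ContinuousMap.toLp 2 haarAddCircle ℂ φg := by
    refine fourierBasis.repr.injective (lp.ext (funext fun n => ?_))
    rw [fourierBasis_repr, fourierBasis_repr, fourierCoeff_toLp, fourierCoeff_toLp]
    exact (fourierCoeff_clm_comp φ hf n).trans ((h n ▸ fourierCoeff_clm_comp φ hg n).symm)
  exact congrArg (· x) (ContinuousMap.toLp_injective haarAddCircle hLp)

variable {v g : AddCircle T → E}

lemma fourierCoeff_of_hasDerivAt (hg : Continuous g)
    (hvg : ∀ t : ℝ, HasDerivAt (fun s : ℝ => v s) (g t) t) (n : ℤ) :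
    fourierCoeff g n = (2 * π * Complex.I * n / T) • fourierCoeff v n := by
  have hparts := intervalIntegral.integral_smul_deriv_eq_deriv_smul (a := 0) (b := T)
    (fun x _ => hasDerivAt_fourier_neg T n x) (fun x _ => hvg x)
    (Continuous.intervalIntegrable (by fun_prop) _ _)
    (Continuous.intervalIntegrable (by fun_prop) _ _)
  simp only [AddCircle.coe_period, QuotientAddGroup.mk_zero, sub_self, zero_sub, mul_smul,
    intervalIntegral.integral_smul] at hparts
  rw [fourierCoeff_eq_intervalIntegral g n 0, fourierCoeff_eq_intervalIntegral v n 0, zero_add,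
    hparts, smul_comm]
  module

lemma exists_hasDerivAt_of_fourierCoeff_zero (hg : Continuous g) (hg₀ : fourierCoeff g 0 = 0) :
    ∃ G : AddCircle T → E, Continuous G ∧ ∀ t : ℝ, HasDerivAt (fun s : ℝ => G s) (g t) t := by
  have hint (a b : ℝ) : IntervalIntegrable (fun s : ℝ => g s) volume a b :=
    Continuous.intervalIntegrable (by fun_prop) a b
  have hperiodic : Function.Periodic (fun t : ℝ => ∫ s in 0..t, g s) T := fun t => by
    have hmean : ∫ s in t..t + T, g s = 0 := by
      rw [fourierCoeff_eq_intervalIntegral g 0 t] at hg₀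
      simpa [hT.out.ne'] using hg₀
    beta_reduce
    rw [← intervalIntegral.integral_add_adjacent_intervals (hint 0 t) (hint t (t + T)), hmean,
      add_zero]
  refine ⟨hperiodic.lift, ?_, fun t => ?_⟩
  · exact continuous_coinduced_dom.mpr (intervalIntegral.continuous_primitive hint 0)
  · simp only [hperiodic.lift_coe]
    exact ((hg.comp (AddCircle.continuous_mk' T)).integral_hasStrictDerivAt 0 t).hasDerivAt

theorem hasDerivAt_iff_fourierCoeff (hv : Continuous v) (hg : Continuous g) :
    (∀ t : ℝ, HasDerivAt (fun s : ℝ => v s) (g t) t) ↔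
      ∀ n : ℤ, fourierCoeff g n = (2 * π * Complex.I * n / T) • fourierCoeff v n := by
  refine ⟨fourierCoeff_of_hasDerivAt hg, fun h => ?_⟩
  obtain ⟨G, hG, hGg⟩ := exists_hasDerivAt_of_fourierCoeff_zero hg (by simpa using h 0)
  let c : E := fourierCoeff v 0 - fourierCoeff G 0
  have hvG : v = fun x => c + G x := by
    refine eq_of_forall_fourierCoeff_eq hv (by fun_prop) fun n => ?_
    rw [fourierCoeff_const_add c hG]
    rcases eq_or_ne n 0 with rfl | hn
    · rw [Pi.single_eq_same, sub_add_cancel]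
    · have hfactor : (2 * π * Complex.I * n / T : ℂ) ≠ 0 := by
        simp [hn, hT.out.ne', pi_ne_zero]
      rw [Pi.single_eq_of_ne hn, zero_add, ← smul_right_inj hfactor, ← h,
        fourierCoeff_of_hasDerivAt hg hGg]
  exact fun t => by simpa only [hvG] using (hGg t).const_add c

end FourierUniqueness

/-! ### Resolvents along the imaginary integers -/

section Resolvent

variable {E F : Type*} [NormedAddCommGroup E] [NormedSpace ℂ E] [NormedAddCommGroup F]
  [NormedSpace ℂ F] {ι A : F →L[ℂ] E}

/-- `R = (z - A)⁻¹`, where the domain `F` of `A` is seen inside `E` through `ι`. -/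
structure IsResolventAt (ι A : F →L[ℂ] E) (z : ℂ) (R : E →L[ℂ] F) : Prop where
  right_inv : ∀ v, z • ι (R v) - A (R v) = v
  left_inv : ∀ w, R (z • ι w - A w) = w

lemma exists_isResolventAt [CompleteSpace E] [CompleteSpace F] {z : ℂ}
    (h : Bijective fun w => z • ι w - A w) : ∃ R, IsResolventAt ι A z R := by
  let L : F →L[ℂ] E := z • ι - A
  let e : F ≃L[ℂ] E :=
    .ofBijective L (LinearMap.ker_eq_bot.mpr h.1) (LinearMap.range_eq_top.mpr h.2)
  exact ⟨e.symm, e.apply_symm_apply, e.symm_apply_apply⟩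

lemma IsResolventAt.sub_eq {p q : ℂ} {R S : E →L[ℂ] F} (hR : IsResolventAt ι A p R)
    (hS : IsResolventAt ι A q S) : R - S = (q - p) • R ∘L ι ∘L S := by
  ext v
  calc R v - S v = R (q • ι (S v) - A (S v)) - R (p • ι (S v) - A (S v)) := by
        rw [hS.right_inv, hR.left_inv]
    _ = R ((q - p) • ι (S v)) := by
        rw [← map_sub]
        congr 1
        module
    _ = (q - p) • R (ι (S v)) := map_smul _ _ _

variable {R : ℤ → E →L[ℂ] F} {C : ℝ}

lemma fwdDiff_resolvent (hR : ∀ n : ℤ, IsResolventAt ι A (n * Complex.I) (R n)) (n : ℤ) :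
    Δ_[1] R n = (-Complex.I) • R (n + 1) ∘L ι ∘L R n := by
  rw [fwdDiff, (hR (n + 1)).sub_eq (hR n)]
  congr 1
  push_cast
  ring

lemma fwdDiff_fwdDiff_resolvent (hR : ∀ n : ℤ, IsResolventAt ι A (n * Complex.I) (R n)) (n : ℤ) :
    Δ_[1] (Δ_[1] R) n = (-2 : ℂ) • R (n + 1 + 1) ∘L (ι ∘L R n) ∘L (ι ∘L R (n + 1)) := by
  have hcomm : Δ_[1] R n = (-Complex.I) • R n ∘L ι ∘L R (n + 1) := by
    rw [fwdDiff, ← neg_sub, (hR n).sub_eq (hR (n + 1)), ← neg_smul]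
    congr 1
    push_cast
    ring
  have htwo : R (n + 1 + 1) - R n = (-2 * Complex.I) • R (n + 1 + 1) ∘L ι ∘L R n := by
    rw [(hR (n + 1 + 1)).sub_eq (hR n)]
    congr 1
    push_cast
    ring
  calc Δ_[1] (Δ_[1] R) n = Δ_[1] R (n + 1) - Δ_[1] R n := rfl
    _ = (-Complex.I) • (R (n + 1 + 1) - R n) ∘L ι ∘L R (n + 1) := by
        rw [fwdDiff_resolvent hR, hcomm, ContinuousLinearMap.sub_comp, smul_sub]
    _ = (-Complex.I * (-2 * Complex.I)) • R (n + 1 + 1) ∘L (ι ∘L R n) ∘L (ι ∘L R (n + 1)) := by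
        rw [htwo, ContinuousLinearMap.smul_comp, smul_smul]
        rfl
    _ = _ := by
        congr 1
        linear_combination 2 * Complex.I_mul_I

lemma isMikhlinSymbol_resolvent (hR : ∀ n : ℤ, IsResolventAt ι A (n * Complex.I) (R n))
    (hC : ∀ n, ‖R n‖ ≤ C) (hιC : ∀ n : ℤ, (1 + |(n : ℝ)|) * ‖ι ∘L R n‖ ≤ C) :
    IsMikhlinSymbol (C + C ^ 2 + 4 * C ^ 3) R := by
  have hC₀ : 0 ≤ C := (norm_nonneg _).trans (hC 0)
  have hιC' (n : ℤ) : (1 + |(n : ℝ)|) * ‖ι ∘L R (n + 1)‖ ≤ 2 * C :=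
    calc (1 + |(n : ℝ)|) * ‖ι ∘L R (n + 1)‖
        ≤ 2 * (1 + |((n + 1 : ℤ) : ℝ)|) * ‖ι ∘L R (n + 1)‖ := by
          gcongr
          exact one_add_abs_le_two_mul_one_add_abs_add_one n
      _ ≤ 2 * C := by linarith [hιC (n + 1)]
  refine ⟨fun n => (hC n).trans (by nlinarith [pow_nonneg hC₀ 2, pow_nonneg hC₀ 3]),
    fun n => ?_, fun n => ?_⟩
  · rw [fwdDiff_resolvent hR, norm_smul, norm_neg, Complex.norm_I, one_mul]
    calc (1 + |(n : ℝ)|) * ‖R (n + 1) ∘L ι ∘L R n‖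
        ≤ (1 + |(n : ℝ)|) * (‖R (n + 1)‖ * ‖ι ∘L R n‖) := by
          gcongr
          exact ContinuousLinearMap.opNorm_comp_le _ _
      _ = ‖R (n + 1)‖ * ((1 + |(n : ℝ)|) * ‖ι ∘L R n‖) := by ring
      _ ≤ C * C := by
          gcongr
          exacts [hC _, hιC n]
      _ ≤ _ := by nlinarith [pow_nonneg hC₀ 3]
  · rw [fwdDiff_fwdDiff_resolvent hR, norm_smul, norm_neg, Complex.norm_two]
    calc (1 + |(n : ℝ)|) ^ 2 * (2 * ‖R (n + 1 + 1) ∘L (ι ∘L R n) ∘L (ι ∘L R (n + 1))‖)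
        ≤ (1 + |(n : ℝ)|) ^ 2 *
            (2 * (‖R (n + 1 + 1)‖ * (‖ι ∘L R n‖ * ‖ι ∘L R (n + 1)‖))) := by
          gcongr
          refine (ContinuousLinearMap.opNorm_comp_le _ _).trans ?_
          gcongr
          exact ContinuousLinearMap.opNorm_comp_le _ _
      _ = 2 * (‖R (n + 1 + 1)‖ * (((1 + |(n : ℝ)|) * ‖ι ∘L R n‖) *
            ((1 + |(n : ℝ)|) * ‖ι ∘L R (n + 1)‖))) := by ring
      _ ≤ 2 * (C * (C * (2 * C))) := by
          have hprod := mul_le_mul (hιC n) (hιC' n) (by positivity) hC₀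
          gcongr
          exact hC _
      _ ≤ _ := by nlinarith [pow_nonneg hC₀ 2]

variable {M : ℝ}

/-- Writing `R n v = -R 0 (A (R n v))` bounds `R n` in the norm of the domain. -/
lemma norm_resolvent_apply_le (hR : ∀ n : ℤ, IsResolventAt ι A (n * Complex.I) (R n))
    (hM : ∀ (n : ℤ) v, |(n : ℝ)| * ‖ι (R n v)‖ ≤ M * ‖v‖) (n : ℤ) (v : E) :
    ‖R n v‖ ≤ ‖R 0‖ * (M + 1) * ‖v‖ := by
  have hA : A (R n v) = (n * Complex.I : ℂ) • ι (R n v) - v := by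
    rw [eq_sub_iff_add_eq, ← eq_sub_iff_add_eq', (hR n).right_inv]
  have hnorm : ‖A (R n v)‖ ≤ (M + 1) * ‖v‖ :=
    calc ‖A (R n v)‖ ≤ ‖(n * Complex.I : ℂ) • ι (R n v)‖ + ‖v‖ := hA ▸ norm_sub_le _ _
      _ = |(n : ℝ)| * ‖ι (R n v)‖ + ‖v‖ := by
          rw [norm_smul, norm_mul, Complex.norm_I, mul_one, Complex.norm_intCast]
      _ ≤ (M + 1) * ‖v‖ := by linarith [hM n v]
  have hzero := (hR 0).left_inv (R n v)
  rw [Int.cast_zero, zero_mul, zero_smul, zero_sub] at hzero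
  calc ‖R n v‖ = ‖R 0 (-A (R n v))‖ := by rw [hzero]
    _ ≤ ‖R 0‖ * ‖A (R n v)‖ := norm_neg (A (R n v)) ▸ (R 0).le_opNorm _
    _ ≤ ‖R 0‖ * ((M + 1) * ‖v‖) := by gcongr
    _ = _ := by ring

theorem exists_isMikhlinSymbol_resolvent
    (hR : ∀ n : ℤ, IsResolventAt ι A (n * Complex.I) (R n)) (hM₀ : 0 ≤ M)
    (hM : ∀ (n : ℤ) v, |(n : ℝ)| * ‖ι (R n v)‖ ≤ M * ‖v‖) : ∃ C, IsMikhlinSymbol C R := by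
  set B : ℝ := ‖R 0‖ * (M + 1)
  have hB (n : ℤ) : ‖R n‖ ≤ B :=
    ContinuousLinearMap.opNorm_le_bound _ (by positivity) (norm_resolvent_apply_le hR hM n)
  have hιR (n : ℤ) : |(n : ℝ)| * ‖ι ∘L R n‖ ≤ M := by
    have h := ContinuousLinearMap.opNorm_le_bound ((n : ℂ) • ι ∘L R n) hM₀ fun v => by
      rw [smul_apply, norm_smul, Complex.norm_intCast]
      exact hM n v
    rwa [norm_smul, Complex.norm_intCast] at h
  refine ⟨_, isMikhlinSymbol_resolvent hR (C := B + ‖ι‖ * B + M)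
    (fun n => (hB n).trans (by rw [add_assoc]; exact le_add_of_nonneg_right (by positivity)))
    fun n => ?_⟩
  calc (1 + |(n : ℝ)|) * ‖ι ∘L R n‖ = ‖ι ∘L R n‖ + |(n : ℝ)| * ‖ι ∘L R n‖ := by ring
    _ ≤ ‖ι‖ * B + M := add_le_add ((ContinuousLinearMap.opNorm_comp_le _ _).trans
        (by gcongr; exact hB n)) (hιR n)
    _ ≤ B + ‖ι‖ * B + M := by linarith [(by positivity : 0 ≤ B)]

end Resolvent

/-! ### Periodic solutions -/

section PeriodicSolutions

local instance fact_zero_lt_two_pi : Fact (0 < 2 * π) := ⟨two_pi_pos⟩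

lemma memHolder_comp_coe {E : Type*} [NormedAddCommGroup E] {r C : ℝ≥0}
    {g : AddCircle (2 * π) → E} (hg : HolderWith C r g) : MemHolder r fun t : ℝ => g t := by
  refine ⟨fun t => by simp only [AddCircle.coe_add_period], C, fun s t => ?_⟩
  rw [← dist_eq_norm, ← Real.dist_eq]
  refine (hg.dist_le s t).trans ?_
  gcongr
  rw [dist_eq_norm, Real.dist_eq, ← AddCircle.coe_sub]
  exact QuotientAddGroup.norm_mk_le_norm

lemma exists_holderWith_of_memHolder {E : Type*} [NormedAddCommGroup E] {r : ℝ≥0}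
    {u : ℝ → E} (hu : MemHolder r u) :
    ∃ (g : AddCircle (2 * π) → E) (C : ℝ≥0), HolderWith C r g ∧ (fun t : ℝ => g t) = u := by
  obtain ⟨hperiodic, K, hK⟩ := hu
  have hlift : (fun t : ℝ => hperiodic.lift t) = u := funext hperiodic.lift_coe
  obtain ⟨C, hC⟩ := exists_holderWith_of_dist_le (r := r) (f := u) (K := K) fun s t => by
    simpa only [dist_eq_norm, Real.norm_eq_abs] using hK s t
  exact ⟨hperiodic.lift, C, holderWith_of_comp_coe (hlift.symm ▸ hC), hlift⟩

variable {E F : Type*} [NormedAddCommGroup E] [NormedSpace ℂ E] [CompleteSpace E]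
  [NormedAddCommGroup F] [NormedSpace ℂ F] [CompleteSpace F] {ι A : F →L[ℂ] E}

lemma hasDerivAt_iff_fourierCoeff_eq_resolvent {R : ℤ → E →L[ℂ] F}
    (hR : ∀ n : ℤ, IsResolventAt ι A (n * Complex.I) (R n)) {u : AddCircle (2 * π) → F}
    {f : AddCircle (2 * π) → E} (hu : Continuous u) (hf : Continuous f) :
    (∀ t : ℝ, HasDerivAt (fun s : ℝ => ι (u s)) (A (u t) + f t) t) ↔
      ∀ n, fourierCoeff u n = R n (fourierCoeff f n) := by
  have hAu : Continuous fun x => A (u x) := by fun_prop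
  have hadd (n : ℤ) : fourierCoeff (fun x => A (u x) + f x) n =
      A (fourierCoeff u n) + fourierCoeff f n := by
    rw [← fourierCoeff_clm_comp A hu]
    exact congrFun (fourierCoeff.add (T := 2 * π) (integrable_haarAddCircle_of_continuous hAu)
      (integrable_haarAddCircle_of_continuous hf)) n
  have hfreq (n : ℤ) : (2 * π * Complex.I * n / (2 * π : ℝ) : ℂ) = n * Complex.I := by
    push_cast
    field_simp
  rw [hasDerivAt_iff_fourierCoeff (v := fun x => ι (u x)) (g := fun x => A (u x) + f x)
    (by fun_prop) (by fun_prop)]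
  refine forall_congr' fun n => ?_
  rw [hadd, hfreq, fourierCoeff_clm_comp ι hu, ← eq_sub_iff_add_eq']
  exact ⟨fun h => by rw [h, (hR n).left_inv], fun h => by rw [h, (hR n).right_inv]⟩

theorem periodic_solution_exists_unique_general {β : ℝ} (hβ : β ∈ Set.Ioo (0 : ℝ) 1)
    (hres : ∀ n : ℤ, Bijective fun w => ((n : ℂ) * Complex.I) • ι w - A w)
    (hbd : ∃ M : ℝ, ∀ (n : ℤ) (w : F),
      |(n : ℝ)| * ‖ι w‖ ≤ M * ‖((n : ℂ) * Complex.I) • ι w - A w‖)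
    {f : ℝ → E} (hf : MemHolder β f) :
    ∃! u : ℝ → F, MemHolder β u ∧ ∀ t : ℝ, HasDerivAt (fun s : ℝ => ι (u s)) (A (u t) + f t) t := by
  lift β to ℝ≥0 using hβ.1.le
  obtain ⟨hβ₀ : 0 < β, hβ₁ : β < 1⟩ := hβ
  choose R hR using fun n => exists_isResolventAt (hres n)
  obtain ⟨M, hM⟩ := hbd
  obtain ⟨C, hC⟩ := exists_isMikhlinSymbol_resolvent hR (abs_nonneg M) fun n v => by
    have h := hM n (R n v)
    rw [(hR n).right_inv] at h
    exact h.trans (by gcongr; exact le_abs_self M)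
  obtain ⟨f, Cf, hf_holder, rfl⟩ := exists_holderWith_of_memHolder hf
  have hf_cont := hf_holder.continuous hβ₀
  obtain ⟨u, Cu, hu, hu_coeff⟩ := hC.exists_holderWith_fourierCoeff_eq hf_holder hβ₀ hβ₁
  have hu_cont := hu.continuous hβ₀
  refine ⟨fun t => u t, ⟨memHolder_comp_coe hu,
    (hasDerivAt_iff_fourierCoeff_eq_resolvent hR hu_cont hf_cont).mpr hu_coeff⟩, ?_⟩
  rintro _ ⟨hv, hv_eq⟩
  obtain ⟨v, Cv, hv_holder, rfl⟩ := exists_holderWith_of_memHolder hv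
  have hv_cont := hv_holder.continuous hβ₀
  have hv_coeff := (hasDerivAt_iff_fourierCoeff_eq_resolvent hR hv_cont hf_cont).mp hv_eq
  rw [eq_of_forall_fourierCoeff_eq hv_cont hu_cont fun n => (hv_coeff n).trans (hu_coeff n).symm]

end PeriodicSolutions

end

/-- **Proposition 3.5.** Let `𝒱` be a complex Banach space and `𝒜` a closed linear operator
on `𝒱` (whose domain `W = 𝒟(𝒜)` carries the graph norm) with `iℤ ⊆ ρ(𝒜)` and
`sup {‖n (in - 𝒜)⁻¹‖ : n ∈ ℤ} < ∞`.  Then for each `f ∈ C^β_{2π}(ℝ, 𝒱)` there exists a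
unique `2π`-periodic solution `u ∈ C^{1+β}_{2π}(ℝ, 𝒱) ∩ C^β_{2π}(ℝ, 𝒟(𝒜))` of
`u_t = 𝒜u + f(t)` for `t ∈ ℝ`. -/
theorem periodic_solution_exists_unique
    {𝒱 : Type*} [NormedAddCommGroup 𝒱] [NormedSpace ℂ 𝒱] [CompleteSpace 𝒱]
    {W : Type*} [NormedAddCommGroup W] [NormedSpace ℂ W] [CompleteSpace W]
    -- `W = 𝒟(𝒜) ⊆ 𝒱` via the continuous injective inclusion `ιW`, with the graph norm:
    (ιW 𝒜 : W →L[ℂ] 𝒱) (hιW : Function.Injective ιW)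
    (hgraph : ∀ w : W, ‖w‖ = ‖ιW w‖ + ‖𝒜 w‖)
    (β : ℝ) (hβ : β ∈ Set.Ioo (0 : ℝ) 1)
    -- `iℤ ⊆ ρ(𝒜)`:
    (hres : ∀ n : ℤ, Function.Bijective
      (fun w : W => ((n : ℂ) * Complex.I) • ιW w - 𝒜 w))
    -- `sup {‖n (in - 𝒜)⁻¹‖ : n ∈ ℤ} < ∞`:
    (hbd : ∃ M : ℝ, ∀ (n : ℤ) (w : W),
      |(n : ℝ)| * ‖ιW w‖ ≤ M * ‖((n : ℂ) * Complex.I) • ιW w - 𝒜 w‖) :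
    ∀ f : ℝ → 𝒱, MemHolder β f →
      ∃! u : ℝ → W, MemHolder β u ∧
        ∀ t : ℝ, HasDerivAt (fun s : ℝ => ιW (u s)) (𝒜 (u t) + f t) t :=
  fun _ hf => periodic_solution_exists_unique_general hβ hres hbd hf

end HopfStmt
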